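/- arXiv:2605.21877 — 7 statements merged into one kernel-verified Lean document; each statement's English description precedes it below -/
import Mathlib

section
/- Let U be a finite-dimensional 𝔽₂-vector space and let 𝒞 be a set of nonzero linear forms on U with dim_{𝔽₂} span(𝒞) ≤ 2. Then there is no homomorphism from F := K4⁻ × F* to the cut template R(U,𝒞). -/
open scoped Classical

/-- A collection of finite edge sets is a 3-graph if every edge has exactly 3 vertices. -/
def IsThreeGraph {α : Type*} (H : Set (Finset α)) : Prop := ∀ e ∈ H, e.card = 3

/-- `φ` is a homomorphism of 3-graphs from `G` to `H`: the image of every edge of `G`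
is a 3-element set that is an edge of `H`. -/
def IsHomOn {α β : Type*} (G : Set (Finset α)) (H : Set (Finset β)) (φ : α → β) : Prop :=
  ∀ e ∈ G, (e.image φ).card = 3 ∧ e.image φ ∈ H

/-- `H` contains a subgraph isomorphic to `G`. -/
def ContainsCopy {α β : Type*} (G : Set (Finset α)) (H : Set (Finset β)) : Prop :=
  ∃ φ : α → β, Function.Injective φ ∧ ∀ e ∈ G, e.image φ ∈ H

/-- `K4⁻`, on vertices `a=0, b=1, c=2, d=3`, with edges `abc, abd, acd`. -/
def K4minus : Set (Finset (Fin 4)) := {{0,1,2}, {0,1,3}, {0,2,3}}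

/-- `F*`, on vertices `1,…,7` (represented by `0,…,6`), with edges `123, 124, 345, 156, 257`. -/
def Fstar : Set (Finset (Fin 7)) := {{0,1,2}, {0,1,3}, {2,3,4}, {0,4,5}, {1,4,6}}

/-- The categorical product of two 3-graphs: a 3-element set of pairs is an edge iff
its set of first coordinates is an edge of `G` and its set of second coordinates is an
edge of `H`. -/
def ProdGraph {α β : Type*} (G : Set (Finset α)) (H : Set (Finset β)) :
    Set (Finset (α × β)) :=
  {e | e.card = 3 ∧ e.image Prod.fst ∈ G ∧ e.image Prod.snd ∈ H}

/-- The 3-graph `F := K4⁻ × F*`. -/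
def F : Set (Finset (Fin 4 × Fin 7)) := ProdGraph K4minus Fstar

/-- The cut template `R(U, 𝒞)`: apex vertices indexed by `𝒞`, bottom vertices `U`, and
edges `{a_c, u, v}` for `c ∈ 𝒞` and distinct `u, v ∈ U` with `c (u + v) = 1`. -/
def CutTemplate (U : Type*) [AddCommGroup U] [Module (ZMod 2) U]
    (C : Set (U →ₗ[ZMod 2] ZMod 2)) : Set (Finset (↥C ⊕ U)) :=
  {e | ∃ (c : ↥C) (u v : U), u ≠ v ∧ (c : U →ₗ[ZMod 2] ZMod 2) (u + v) = 1 ∧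
      e = {Sum.inl c, Sum.inr u, Sum.inr v}}


namespace CutAux

/-- apex, bottom, bottom with the cut condition -/
def T {U : Type} [AddCommGroup U] [Module (ZMod 2) U] {C : Set (U →ₗ[ZMod 2] ZMod 2)}
    (p q r : ↥C ⊕ U) : Prop :=
  ∃ (c : ↥C) (u v : U), p = Sum.inl c ∧ q = Sum.inr u ∧ r = Sum.inr v ∧
    (c : U →ₗ[ZMod 2] ZMod 2) (u + v) = 1

theorem K4_mem : ∀ x y z : Fin 4, x ≠ y → y ≠ z → x ≠ z → (x = 0 ∨ y = 0 ∨ z = 0) →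
    ({x, y, z} : Finset (Fin 4)) ∈ K4minus := by
  simp only [K4minus, Set.mem_insert_iff, Set.mem_singleton_iff]
  decide

theorem T_of_image {U : Type} [AddCommGroup U] [Module (ZMod 2) U]
    {C : Set (U →ₗ[ZMod 2] ZMod 2)} (p q r : ↥C ⊕ U)
    (hcard : ({p, q, r} : Finset (↥C ⊕ U)).card = 3)
    (h : ({p, q, r} : Finset (↥C ⊕ U)) ∈ CutTemplate U C) : T p q r ∨ T q p r ∨ T r p q := by
  obtain ⟨c, u, v, huv, hc, he⟩ := h
  have hpq : p ≠ q := by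
    rintro rfl
    have := Finset.card_le_two (a := p) (b := r)
    simp at hcard
    omega
  have hpr : p ≠ r := by
    rintro rfl
    have := Finset.card_le_two (a := q) (b := p)
    simp at hcard
    omega
  have hqr : q ≠ r := by
    rintro rfl
    have := Finset.card_le_two (a := p) (b := q)
    simp at hcard
    omega
  have hc' : (c : U →ₗ[ZMod 2] ZMod 2) (v + u) = 1 := by rw [add_comm]; exact hc
  have h1 : p ∈ ({Sum.inl c, Sum.inr u, Sum.inr v} : Finset (↥C ⊕ U)) := by rw [← he]; simp
  have h2 : q ∈ ({Sum.inl c, Sum.inr u, Sum.inr v} : Finset (↥C ⊕ U)) := by rw [← he]; simp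
  have h3 : r ∈ ({Sum.inl c, Sum.inr u, Sum.inr v} : Finset (↥C ⊕ U)) := by rw [← he]; simp
  simp only [Finset.mem_insert, Finset.mem_singleton] at h1 h2 h3
  rcases h1 with rfl | rfl | rfl <;> rcases h2 with rfl | rfl | rfl <;>
    rcases h3 with rfl | rfl | rfl <;> first
    | exact absurd rfl hpq
    | exact absurd rfl hpr
    | exact absurd rfl hqr
    | exact Or.inl ⟨_, _, _, rfl, rfl, rfl, by assumption⟩
    | exact Or.inr (Or.inl ⟨_, _, _, rfl, rfl, rfl, by assumption⟩)
    | exact Or.inr (Or.inr ⟨_, _, _, rfl, rfl, rfl, by assumption⟩)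

theorem edge {U : Type} [AddCommGroup U] [Module (ZMod 2) U]
    {C : Set (U →ₗ[ZMod 2] ZMod 2)} {φ : Fin 4 × Fin 7 → ↥C ⊕ U}
    (hφ : IsHomOn F (CutTemplate U C) φ) {i j k : Fin 7}
    (he : ({i, j, k} : Finset (Fin 7)) ∈ Fstar)
    {x y z : Fin 4} (h1 : x ≠ y) (h2 : y ≠ z) (h3 : x ≠ z) (h0 : x = 0 ∨ y = 0 ∨ z = 0) :
    T (φ (x, i)) (φ (y, j)) (φ (z, k)) ∨ T (φ (y, j)) (φ (x, i)) (φ (z, k)) ∨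
      T (φ (z, k)) (φ (x, i)) (φ (y, j)) := by
  have hF : ({(x, i), (y, j), (z, k)} : Finset (Fin 4 × Fin 7)) ∈ F := by
    refine ⟨?_, ?_, ?_⟩
    · rw [Finset.card_eq_three]
      exact ⟨(x, i), (y, j), (z, k), by simp [h1], by simp [h3], by simp [h2], by congr⟩
    · have := K4_mem x y z h1 h2 h3 h0
      convert this using 1
      ext; simp
    · convert he using 1
      ext; simp
  obtain ⟨a, b⟩ := hφ _ hF
  refine T_of_image _ _ _ ?_ ?_
  · rw [← a]
    congr 1
    ext; simp [eq_comm]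
  · convert b using 1
    ext; simp [eq_comm]

/-- exactly one -/
def one (a b c : Bool) : Prop :=
  (a = true ∧ b = false ∧ c = false) ∨ (a = false ∧ b = true ∧ c = false) ∨
    (a = false ∧ b = false ∧ c = true)

theorem tri (f g h : Fin 4 → Bool)
    (H : ∀ x y z : Fin 4, x ≠ y → y ≠ z → x ≠ z → (x = 0 ∨ y = 0 ∨ z = 0) →
      one (f x) (g y) (h z)) :
    (∀ x, f x = decide (x = 0) ∧ g x = decide (x = 0) ∧ h x = decide (x = 0)) ∨
    (∀ x y, f x = f y ∧ g x = g y ∧ h x = h y) ∧ one (f 0) (g 0) (h 0) := by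
  have a1 := H 0 1 2 (by decide) (by decide) (by decide) (by decide)
  have a2 := H 0 2 1 (by decide) (by decide) (by decide) (by decide)
  have a3 := H 1 0 2 (by decide) (by decide) (by decide) (by decide)
  have a4 := H 1 2 0 (by decide) (by decide) (by decide) (by decide)
  have a5 := H 2 0 1 (by decide) (by decide) (by decide) (by decide)
  have a6 := H 2 1 0 (by decide) (by decide) (by decide) (by decide)
  have b1 := H 0 1 3 (by decide) (by decide) (by decide) (by decide)
  have b2 := H 0 3 1 (by decide) (by decide) (by decide) (by decide)
  have b3 := H 1 0 3 (by decide) (by decide) (by decide) (by decide)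
  have b4 := H 1 3 0 (by decide) (by decide) (by decide) (by decide)
  have b5 := H 3 0 1 (by decide) (by decide) (by decide) (by decide)
  have b6 := H 3 1 0 (by decide) (by decide) (by decide) (by decide)
  have c1 := H 0 2 3 (by decide) (by decide) (by decide) (by decide)
  have c2 := H 0 3 2 (by decide) (by decide) (by decide) (by decide)
  have c3 := H 2 0 3 (by decide) (by decide) (by decide) (by decide)
  have c4 := H 2 3 0 (by decide) (by decide) (by decide) (by decide)
  have c5 := H 3 0 2 (by decide) (by decide) (by decide) (by decide)
  have c6 := H 3 2 0 (by decide) (by decide) (by decide) (by decide)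
  clear H
  simp only [Fin.forall_fin_succ]
  simp only [one] at *
  simp
  generalize f 0 = f0 at *
  generalize f 1 = f1 at *
  generalize f 2 = f2 at *
  generalize f 3 = f3 at *
  generalize g 0 = g0 at *
  generalize g 1 = g1 at *
  generalize g 2 = g2 at *
  generalize g 3 = g3 at *
  generalize h 0 = h0 at *
  generalize h 1 = h1 at *
  generalize h 2 = h2 at *
  generalize h 3 = h3 at *
  rcases a1 with ⟨rfl, rfl, rfl⟩ | ⟨rfl, rfl, rfl⟩ | ⟨rfl, rfl, rfl⟩ <;> simp at * <;> grind (splits := 40)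

theorem one_of_T {U : Type} [AddCommGroup U] [Module (ZMod 2) U]
    {C : Set (U →ₗ[ZMod 2] ZMod 2)} {p q r : ↥C ⊕ U} (h : T p q r ∨ T q p r ∨ T r p q) :
    one p.isLeft q.isLeft r.isLeft := by
  rcases h with ⟨c, u, v, rfl, rfl, rfl, -⟩ | ⟨c, u, v, rfl, rfl, rfl, -⟩ |
    ⟨c, u, v, rfl, rfl, rfl, -⟩ <;> simp [one]

theorem types {U : Type} [AddCommGroup U] [Module (ZMod 2) U]
    {C : Set (U →ₗ[ZMod 2] ZMod 2)} {φ : Fin 4 × Fin 7 → ↥C ⊕ U}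
    (hφ : IsHomOn F (CutTemplate U C) φ) {i j k : Fin 7}
    (he : ({i, j, k} : Finset (Fin 7)) ∈ Fstar) :
    (∀ x, (φ (x, i)).isLeft = decide (x = 0) ∧ (φ (x, j)).isLeft = decide (x = 0) ∧
      (φ (x, k)).isLeft = decide (x = 0)) ∨
    (∀ x y, (φ (x, i)).isLeft = (φ (y, i)).isLeft ∧ (φ (x, j)).isLeft = (φ (y, j)).isLeft ∧
      (φ (x, k)).isLeft = (φ (y, k)).isLeft) ∧
      one (φ (0, i)).isLeft (φ (0, j)).isLeft (φ (0, k)).isLeft :=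
  tri (fun x => (φ (x, i)).isLeft) (fun x => (φ (x, j)).isLeft) (fun x => (φ (x, k)).isLeft)
    (fun _ _ _ h1 h2 h3 h0 => one_of_T (edge hφ he h1 h2 h3 h0))

theorem e1 : ({0, 1, 2} : Finset (Fin 7)) ∈ Fstar := by simp [Fstar]
theorem e2 : ({0, 1, 3} : Finset (Fin 7)) ∈ Fstar := by simp [Fstar]
theorem e3 : ({2, 3, 4} : Finset (Fin 7)) ∈ Fstar := by simp [Fstar]
theorem e4 : ({0, 4, 5} : Finset (Fin 7)) ∈ Fstar := by simp [Fstar]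
theorem e5 : ({1, 4, 6} : Finset (Fin 7)) ∈ Fstar := by simp [Fstar]

theorem rows {U : Type} [AddCommGroup U] [Module (ZMod 2) U]
    {C : Set (U →ₗ[ZMod 2] ZMod 2)} {φ : Fin 4 × Fin 7 → ↥C ⊕ U}
    (hφ : IsHomOn F (CutTemplate U C) φ) (x : Fin 4) (i : Fin 7) :
    (φ (x, i)).isLeft = decide (x = 0) := by
  have t1 := types hφ e1
  have t2 := types hφ e2
  have t3 := types hφ e3
  have t4 := types hφ e4
  have t5 := types hφ e5
  have clash : ∀ i : Fin 7, (∀ x, (φ (x, i)).isLeft = decide (x = 0)) →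
      (∀ x y, (φ (x, i)).isLeft = (φ (y, i)).isLeft) → False := by
    intro i h h'
    have := h' 0 1
    rw [h 0, h 1] at this
    simp at this
  rcases t1 with t1 | ⟨t1, o1⟩
  · rcases t2 with t2 | ⟨t2, -⟩
    swap
    · exact (clash 0 (fun x => (t1 x).1) (fun x y => (t2 x y).1)).elim
    rcases t3 with t3 | ⟨t3, -⟩
    swap
    · exact (clash 2 (fun x => (t1 x).2.2) (fun x y => (t3 x y).1)).elim
    rcases t4 with t4 | ⟨t4, -⟩
    swap
    · exact (clash 0 (fun x => (t1 x).1) (fun x y => (t4 x y).1)).elim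
    rcases t5 with t5 | ⟨t5, -⟩
    swap
    · exact (clash 1 (fun x => (t1 x).2.1) (fun x y => (t5 x y).1)).elim
    fin_cases i
    · exact (t1 x).1
    · exact (t1 x).2.1
    · exact (t1 x).2.2
    · exact (t2 x).2.2
    · exact (t3 x).2.2
    · exact (t4 x).2.2
    · exact (t5 x).2.2
  · exfalso
    rcases t2 with t2 | ⟨-, o2⟩
    · exact clash 0 (fun x => (t2 x).1) (fun x y => (t1 x y).1)
    rcases t3 with t3 | ⟨-, o3⟩
    · exact clash 2 (fun x => (t3 x).1) (fun x y => (t1 x y).2.2)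
    rcases t4 with t4 | ⟨-, o4⟩
    · exact clash 0 (fun x => (t4 x).1) (fun x y => (t1 x y).1)
    rcases t5 with t5 | ⟨-, o5⟩
    · exact clash 1 (fun x => (t5 x).1) (fun x y => (t1 x y).2.1)
    unfold one at *
    grind

theorem zmod2 : ∀ b1 b2 b3 d1 d2 d3 : ZMod 2, b1 + d2 = 1 → b1 + d3 = 1 → b2 + d3 = 1 →
    b2 + d1 = 1 → b1 + d1 = 1 := by decide

/-- in the row type case, the two bottoms of an edge are separated by a member of `C` -/
theorem sep {U : Type} [AddCommGroup U] [Module (ZMod 2) U]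
    {C : Set (U →ₗ[ZMod 2] ZMod 2)} {φ : Fin 4 × Fin 7 → ↥C ⊕ U}
    (hφ : IsHomOn F (CutTemplate U C) φ) {b : Fin 4 → Fin 7 → U}
    (hb : ∀ x i, x ≠ 0 → φ (x, i) = Sum.inr (b x i)) {i j k : Fin 7}
    (he : ({k, i, j} : Finset (Fin 7)) ∈ Fstar) :
    ∃ c ∈ C, c (b 1 i) ≠ c (b 1 j) := by
  obtain ⟨c, hc⟩ : ∃ c : ↥C, φ (0, k) = Sum.inl c := by
    have := rows hφ 0 k
    simpa [Sum.isLeft_iff] using this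
  have key : ∀ y z : Fin 4, y ≠ 0 → z ≠ 0 → y ≠ z →
      (c : U →ₗ[ZMod 2] ZMod 2) (b y i) + (c : U →ₗ[ZMod 2] ZMod 2) (b z j) = 1 := by
    intro y z hy hz hyz
    have := edge hφ he (x := 0) (y := y) (z := z) hy.symm hyz hz.symm (Or.inl rfl)
    rw [hc, hb y i hy, hb z j hz] at this
    rcases this with ⟨c', u, v, h1, h2, h3, h⟩ | ⟨c', u, v, h1, -⟩ | ⟨c', u, v, h1, -⟩
    · cases h1; cases h2; cases h3
      simpa using h
    · cases h1
    · cases h1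
  refine ⟨c, c.2, ?_⟩
  have := zmod2 _ _ (0 : ZMod 2) _ _ _ (key 1 2 (by decide) (by decide) (by decide))
    (key 1 3 (by decide) (by decide) (by decide))
    (key 2 3 (by decide) (by decide) (by decide)) (key 2 1 (by decide) (by decide) (by decide))
  intro h
  rw [h] at this
  revert this
  generalize (c : U →ₗ[ZMod 2] ZMod 2) (b 1 j) = t
  revert t
  decide

end CutAux

open CutAux in
/-- If `𝒞` consists of nonzero linear forms and `dim span 𝒞 ≤ 2`, then there is no
homomorphism from `F = K4⁻ × F*` to the cut template `R(U, 𝒞)`. -/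
theorem no_hom_F_to_rank_two_cut_template (U : Type) [AddCommGroup U] [Module (ZMod 2) U]
    [FiniteDimensional (ZMod 2) U] (C : Set (U →ₗ[ZMod 2] ZMod 2))
    (hC : ∀ c ∈ C, c ≠ 0)
    (hrank : Module.finrank (ZMod 2) ↥(Submodule.span (ZMod 2) C) ≤ 2) :
    ¬ ∃ φ : Fin 4 × Fin 7 → ↥C ⊕ U, IsHomOn F (CutTemplate U C) φ := by
  rintro ⟨φ, hφ⟩
  have hb : ∀ (x : Fin 4) (i : Fin 7), ∃ u : U, x ≠ 0 → φ (x, i) = Sum.inr u := by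
    intro x i
    by_cases hx : x = 0
    · exact ⟨0, fun h => absurd hx h⟩
    · have := rows hφ x i
      rcases h : φ (x, i) with c | u
      · rw [h] at this; simp [hx] at this
      · exact ⟨u, fun _ => rfl⟩
  choose b hb using hb
  let ev : U → Module.Dual (ZMod 2) ↥(Submodule.span (ZMod 2) C) :=
    fun u => (LinearMap.applyₗ (R := ZMod 2) (M₂ := ZMod 2) u).comp
      (Submodule.span (ZMod 2) C).subtype
  have hne : ∀ {i j k : Fin 7}, ({k, i, j} : Finset (Fin 7)) ∈ Fstar →
      ev (b 1 i) ≠ ev (b 1 j) := by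
    intro i j k he h
    obtain ⟨c, hc, hne⟩ := sep hφ hb he
    exact hne (LinearMap.congr_fun h ⟨c, Submodule.subset_span hc⟩)
  have hmem : ∀ i j : Fin 7, i ≤ 4 → j ≤ 4 → i ≠ j →
      ∃ k, ({k, i, j} : Finset (Fin 7)) ∈ Fstar := by
    simp only [Fstar, Set.mem_insert_iff, Set.mem_singleton_iff]
    decide
  let g : Fin 5 → Module.Dual (ZMod 2) ↥(Submodule.span (ZMod 2) C) :=
    fun i => ev (b 1 (Fin.castLE (by norm_num) i))
  have h5 : ∀ i : Fin 5, (Fin.castLE (by norm_num) i : Fin 7) ≤ 4 := by decide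
  have hg : Function.Injective g := by
    intro i j hij
    by_contra hne'
    obtain ⟨k, hk⟩ := hmem (Fin.castLE (by norm_num) i) (Fin.castLE (by norm_num) j)
      (h5 i) (h5 j) (by simpa [Fin.ext_iff] using hne')
    exact hne hk hij
  have : Finite (Module.Dual (ZMod 2) ↥(Submodule.span (ZMod 2) C)) :=
    Module.finite_of_finite (ZMod 2)
  have h1 := Nat.card_le_card_of_injective g hg
  rw [Module.natCard_eq_pow_finrank (K := ZMod 2)
    (V := Module.Dual (ZMod 2) ↥(Submodule.span (ZMod 2) C)), Subspace.dual_finrank_eq] at h1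
  simp only [Nat.card_eq_fintype_card, Fintype.card_fin, ZMod.card] at h1
  have := Nat.pow_le_pow_right (n := 2) (by norm_num) hrank
  omega
end

section
/- Let U be a finite-dimensional 𝔽₂-vector space and let 𝒞 be a set of nonzero linear forms on U with dim_{𝔽₂} span(𝒞) ≤ 2. Then every blowup of the cut template R(U,𝒞) contains no subgraph isomorphic to F := K4⁻ × F*. -/
open scoped Classical

/-- The blowup of a 3-graph `T` determined by the part-assignment `g : β → α`
(the part of a vertex `i` of `T` is `g ⁻¹ {i}`): edges are the 3-element subsets of `β`
whose image under `g` is an edge of `T`. -/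
def Blowup {α β : Type*} (T : Set (Finset α)) (g : β → α) : Set (Finset β) :=
  {e | e.card = 3 ∧ e.image g ∈ T}

theorem aux_span {U : Type} [AddCommGroup U]
    [Module (ZMod 2) U] [FiniteDimensional (ZMod 2) U] (C : Set (U →ₗ[ZMod 2] ZMod 2))
    (hrank : Module.finrank (ZMod 2) ↥(Submodule.span (ZMod 2) C) ≤ 2)
    (c d e : U →ₗ[ZMod 2] ZMod 2) (hc : c ∈ C) (hd : d ∈ C) (he : e ∈ C) (hc0 : c ≠ 0)
    (p : U) (hp : c p = 0) (hdp : d p = 1) : ∃ a b : ZMod 2, e = a • c + b • d := by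
  have hli : LinearIndependent (ZMod 2) ![c, d] := by
    rw [LinearIndependent.pair_iff]
    intro s t hst
    have ht : t = 0 := by
      have := congrArg (fun f => f p) hst
      simpa [hp, hdp] using this
    subst ht
    simp only [zero_smul, add_zero, smul_eq_zero] at hst
    exact ⟨hst.resolve_right hc0, rfl⟩
  have hle : Submodule.span (ZMod 2) {c, d} ≤ Submodule.span (ZMod 2) C :=
    Submodule.span_mono (by intro x hx; rcases hx with rfl | rfl <;> assumption)
  have h2 : Module.finrank (ZMod 2) (Submodule.span (ZMod 2) {c, d}) = 2 := by
    have := finrank_span_eq_card hli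
    have hr : Set.range ![c, d] = {c, d} := by
      ext x; simp [eq_comm, or_comm]
    rw [hr] at this
    simpa using this
  have heq := Submodule.eq_of_le_of_finrank_le hle (by rw [h2]; exact hrank)
  have hm : e ∈ Submodule.span (ZMod 2) {c, d} := heq ▸ Submodule.subset_span he
  obtain ⟨a, b, h⟩ := Submodule.mem_span_pair.1 hm
  exact ⟨a, b, h.symm⟩

theorem aux_eq {U : Type} [AddCommGroup U]
    [Module (ZMod 2) U] [FiniteDimensional (ZMod 2) U] (C : Set (U →ₗ[ZMod 2] ZMod 2))
    (hrank : Module.finrank (ZMod 2) ↥(Submodule.span (ZMod 2) C) ≤ 2)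
    (c d d' e : U →ₗ[ZMod 2] ZMod 2) (hc : c ∈ C) (hd : d ∈ C) (hd' : d' ∈ C) (he : e ∈ C)
    (hc0 : c ≠ 0)
    (p q : U) (hp : c p = 0) (hdp : d p = 1) (hq : c q = 0) (hdq : d' q = 1) : e p = e q := by
  obtain ⟨a, b, rfl⟩ := aux_span C hrank c d e hc hd he hc0 p hp hdp
  obtain ⟨a', b', rfl⟩ := aux_span C hrank c d d' hc hd hd' hc0 p hp hdp
  simp only [LinearMap.add_apply, LinearMap.smul_apply, hp, hq, hdp, smul_eq_mul, mul_zero,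
    zero_add] at hdq ⊢
  have : ∀ x y z : ZMod 2, x * y = 1 → z * 1 = z * y := by decide
  exact this _ _ _ hdq

theorem aux_alg {U : Type} [AddCommGroup U]
    [Module (ZMod 2) U] [FiniteDimensional (ZMod 2) U] (C : Set (U →ₗ[ZMod 2] ZMod 2))
    (hC : ∀ c ∈ C, c ≠ 0)
    (hrank : Module.finrank (ZMod 2) ↥(Submodule.span (ZMod 2) C) ≤ 2)
    (c : Fin 7 → (U →ₗ[ZMod 2] ZMod 2)) (hc : ∀ y, c y ∈ C) (u : Fin 7 → U)
    (h : ∀ i j k, ({i, j, k} : Finset (Fin 7)) ∈ Fstar → c i (u j) + c i (u k) = 1) : False := by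
  have S : ∀ x y : ZMod 2, x + y = 1 → y + x = 1 := by decide
  have T : ∀ x y z : ZMod 2, x + y = 1 → x + z = 1 → y + z = 0 := by decide
  have T' : ∀ x y z : ZMod 2, x + y = 1 → x + z = 0 → y + z = 1 := by decide
  have mem : ∀ i j k : Fin 7, (({i, j, k} : Finset (Fin 7)) = {0,1,2} ∨
      ({i, j, k} : Finset (Fin 7)) = {0,1,3} ∨ ({i, j, k} : Finset (Fin 7)) = {2,3,4} ∨
      ({i, j, k} : Finset (Fin 7)) = {0,4,5} ∨ ({i, j, k} : Finset (Fin 7)) = {1,4,6}) →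
      c i (u j) + c i (u k) = 1 := by
    intro i j k hh
    exact h i j k (by simpa [Fstar] using hh)
  have w0 : c 0 (u 2 + u 3) = 0 := by
    rw [map_add]; exact T _ _ _ (mem 0 1 2 (by decide)) (mem 0 1 3 (by decide))
  have w1 : c 1 (u 2 + u 3) = 0 := by
    rw [map_add]; exact T _ _ _ (mem 1 0 2 (by decide)) (mem 1 0 3 (by decide))
  have w4 : c 4 (u 2 + u 3) = 1 := by
    rw [map_add]; exact (mem 4 2 3 (by decide))
  have e01 : c 1 = c 0 := by
    obtain ⟨a, b, hab⟩ := aux_span C hrank _ _ _ (hc 0) (hc 4) (hc 1) (hC _ (hc 0)) _ w0 w4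
    have hb : b = 0 := by
      have := w1
      rw [hab] at this
      simpa [-map_add, w0, w4] using this
    have ha : a ≠ 0 := by
      rintro rfl
      exact hC _ (hc 1) (by rw [hab, hb]; simp)
    have : ∀ a : ZMod 2, a ≠ 0 → a = 1 := by decide
    rw [hab, hb, this a ha]; simp
  have k01 : c 0 (u 0 + u 1) = 0 := by
    rw [map_add]
    exact T _ _ _ (S _ _ (e01 ▸ mem 1 0 2 (by decide))) (S _ _ (mem 0 1 2 (by decide)))
  have d01 : c 2 (u 0 + u 1) = 1 := by
    rw [map_add]; exact (mem 2 0 1 (by decide))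
  have d04 : c 5 (u 0 + u 4) = 1 := by
    rw [map_add]; exact (mem 5 0 4 (by decide))
  have n04 : c 0 (u 0 + u 4) = 1 := by
    have : ∀ x : ZMod 2, x ≠ 0 → x = 1 := by decide
    apply this
    intro h0
    have := aux_eq C hrank (c 0) (c 2) (c 5) (c 6) (hc _) (hc _) (hc _) (hc _) (hC _ (hc 0))
      _ _ k01 d01 h0 d04
    have h6 := mem 6 1 4 (by decide)
    rw [map_add, map_add] at this
    have Q : ∀ x y z : ZMod 2, x + y = x + z → y + z ≠ 1 := by decide
    exact Q _ _ _ this h6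
  rw [map_add] at n04
  have k24 : c 0 (u 2 + u 4) = 0 := by
    rw [map_add]
    exact T _ _ _ (e01 ▸ mem 1 0 2 (by decide)) n04
  have k34 : c 0 (u 3 + u 4) = 0 := by
    rw [map_add]
    exact T _ _ _ (e01 ▸ mem 1 0 3 (by decide)) n04
  have := aux_eq C hrank (c 0) (c 3) (c 2) (c 4) (hc _) (hc _) (hc _) (hc _) (hC _ (hc 0))
      _ _ k24 (by rw [map_add]; exact mem 3 2 4 (by decide)) k34
      (by rw [map_add]; exact mem 2 3 4 (by decide))
  rw [map_add, map_add] at this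
  rw [map_add] at w4
  have Q : ∀ x y z : ZMod 2, x + z = y + z → x + y ≠ 1 := by decide
  exact Q _ _ _ this w4

def ExOne (p q r : Prop) : Prop := (p ∧ ¬ q ∧ ¬ r) ∨ (¬ p ∧ q ∧ ¬ r) ∨ (¬ p ∧ ¬ q ∧ r)

theorem aux_grid (A : Fin 4 → Fin 7 → Prop) (i j k : Fin 7)
    (h : ∀ x y z : Fin 4, (({x, y, z} : Finset (Fin 4)) = {0,1,2} ∨
      ({x, y, z} : Finset (Fin 4)) = {0,1,3} ∨ ({x, y, z} : Finset (Fin 4)) = {0,2,3}) →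
      ExOne (A x i) (A y j) (A z k)) :
    ((A 0 i ∧ A 0 j ∧ A 0 k) ∧ (¬ A 1 i ∧ ¬ A 1 j ∧ ¬ A 1 k) ∧ (¬ A 2 i ∧ ¬ A 2 j ∧ ¬ A 2 k)
      ∧ (¬ A 3 i ∧ ¬ A 3 j ∧ ¬ A 3 k)) ∨
    (ExOne (A 0 i) (A 0 j) (A 0 k) ∧ (A 1 i ↔ A 0 i) ∧ (A 1 j ↔ A 0 j) ∧ (A 1 k ↔ A 0 k)) := by
  have h1 := h 0 1 2 (by decide)
  have h2 := h 0 2 1 (by decide)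
  have h3 := h 1 0 2 (by decide)
  have h4 := h 1 2 0 (by decide)
  have h5 := h 2 0 1 (by decide)
  have h6 := h 2 1 0 (by decide)
  have g1 := h 0 1 3 (by decide)
  have g2 := h 0 3 1 (by decide)
  have g3 := h 1 0 3 (by decide)
  have g4 := h 1 3 0 (by decide)
  have g5 := h 3 0 1 (by decide)
  have g6 := h 3 1 0 (by decide)
  have f1 := h 0 2 3 (by decide)
  have f2 := h 0 3 2 (by decide)
  have f3 := h 2 0 3 (by decide)
  have f4 := h 2 3 0 (by decide)
  have f5 := h 3 0 2 (by decide)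
  have f6 := h 3 2 0 (by decide)
  clear h
  unfold ExOne at *
  by_cases a0 : A 0 i <;> by_cases a1 : A 0 j <;> by_cases a2 : A 0 k <;>
  by_cases b0 : A 1 i <;> by_cases b1 : A 1 j <;> by_cases b2 : A 1 k <;>
    simp only [a0, a1, a2, b0, b1, b2, true_and, and_true, false_and, and_false, or_false,
      false_or, not_true, not_false_iff, iff_true, iff_false, true_iff, false_iff] at * <;> grind

theorem aux_apex (A : Fin 4 → Fin 7 → Prop)
    (h : ∀ x y z : Fin 4, ∀ i j k : Fin 7, ({x, y, z} : Finset (Fin 4)) ∈ K4minus →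
      ({i, j, k} : Finset (Fin 7)) ∈ Fstar → ExOne (A x i) (A y j) (A z k)) :
    ∀ y, A 0 y ∧ ¬ A 1 y ∧ ¬ A 2 y ∧ ¬ A 3 y := by
  have G := fun i j k (hf : ({i, j, k} : Finset (Fin 7)) ∈ Fstar) =>
    aux_grid A i j k (fun x y z hx => h x y z i j k (by simpa [K4minus] using hx) hf)
  have g1 := G 0 1 2 (by simp [Fstar])
  have g2 := G 0 1 3 (by simp [Fstar])
  have g3 := G 2 3 4 (by simp [Fstar])
  have g4 := G 0 4 5 (by simp [Fstar])
  have g5 := G 1 4 6 (by simp [Fstar])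
  clear G h
  unfold ExOne at *
  have : (A 0 0 ∧ ¬ A 1 0) ∨ (A 0 1 ∧ ¬ A 1 1) ∨ (A 0 4 ∧ ¬ A 1 4) ∨ (A 0 2 ∧ ¬ A 1 2) := by
    grind
  intro y
  fin_cases y <;> simp <;> grind

def fm {U : Type} [AddCommGroup U] [Module (ZMod 2) U] {C : Set (U →ₗ[ZMod 2] ZMod 2)} :
    ↥C ⊕ U → (U →ₗ[ZMod 2] ZMod 2)
  | Sum.inl c => c
  | Sum.inr _ => 0

def vc {U : Type} [AddCommGroup U] [Module (ZMod 2) U] {C : Set (U →ₗ[ZMod 2] ZMod 2)} :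
    ↥C ⊕ U → U
  | Sum.inl _ => 0
  | Sum.inr u => u

def ap {U : Type} [AddCommGroup U] [Module (ZMod 2) U] {C : Set (U →ₗ[ZMod 2] ZMod 2)}
    (p : ↥C ⊕ U) : Prop := ∃ c, p = Sum.inl c

theorem aux_edge {U : Type} [AddCommGroup U] [Module (ZMod 2) U]
    {C : Set (U →ₗ[ZMod 2] ZMod 2)} (p q r : ↥C ⊕ U)
    (h : ({p, q, r} : Finset (↥C ⊕ U)) ∈ CutTemplate U C) :
    ExOne (ap p) (ap q) (ap r) ∧ (ap p → fm p (vc q) + fm p (vc r) = 1) := by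
  obtain ⟨c, u, v, huv, h1, he⟩ := h
  rw [map_add] at h1
  have hp : p ∈ ({p, q, r} : Finset (↥C ⊕ U)) := by simp
  have hq : q ∈ ({p, q, r} : Finset (↥C ⊕ U)) := by simp
  have hr : r ∈ ({p, q, r} : Finset (↥C ⊕ U)) := by simp
  have k1 : Sum.inl c ∈ ({p, q, r} : Finset (↥C ⊕ U)) := by rw [he]; simp
  have k2 : Sum.inr u ∈ ({p, q, r} : Finset (↥C ⊕ U)) := by rw [he]; simp
  have k3 : Sum.inr v ∈ ({p, q, r} : Finset (↥C ⊕ U)) := by rw [he]; simp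
  rw [he] at hp hq hr
  simp only [Finset.mem_insert, Finset.mem_singleton] at hp hq hr k1 k2 k3
  clear he
  have h2 := h1
  rw [add_comm] at h2
  rcases hp with rfl | rfl | rfl <;> rcases hq with rfl | rfl | rfl <;>
    rcases hr with rfl | rfl | rfl <;> simp_all [ExOne, ap, fm, vc]

/-- If `𝒞` consists of nonzero linear forms and `dim span 𝒞 ≤ 2`, then every blowup of
the cut template `R(U, 𝒞)` contains no subgraph isomorphic to `F = K4⁻ × F*`. -/
theorem blowup_of_rank_two_cut_template_F_free (U : Type) [AddCommGroup U]
    [Module (ZMod 2) U] [FiniteDimensional (ZMod 2) U] (C : Set (U →ₗ[ZMod 2] ZMod 2))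
    (hC : ∀ c ∈ C, c ≠ 0)
    (hrank : Module.finrank (ZMod 2) ↥(Submodule.span (ZMod 2) C) ≤ 2) :
    ∀ (β : Type) (g : β → ↥C ⊕ U), ¬ ContainsCopy F (Blowup (CutTemplate U C) g) := by
  rintro β g ⟨φ, -, hφ⟩
  have key : ∀ x y z : Fin 4, ∀ i j k : Fin 7, ({x, y, z} : Finset (Fin 4)) ∈ K4minus →
      ({i, j, k} : Finset (Fin 7)) ∈ Fstar →
      ({g (φ (x, i)), g (φ (y, j)), g (φ (z, k))} : Finset (↥C ⊕ U)) ∈ CutTemplate U C := by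
    intro x y z i j k hx hi
    have h3 : ({x, y, z} : Finset (Fin 4)).card = 3 := by
      rcases hx with h | h | h <;> rw [h] <;> rfl
    have hmem : ({(x, i), (y, j), (z, k)} : Finset (Fin 4 × Fin 7)) ∈ F := by
      refine ⟨le_antisymm Finset.card_le_three ?_, ?_, ?_⟩
      · rw [← h3]
        have : ({x, y, z} : Finset (Fin 4)) =
          ({(x, i), (y, j), (z, k)} : Finset (Fin 4 × Fin 7)).image Prod.fst := by
          simp [Finset.image_insert]
        rw [this]
        exact Finset.card_image_le
      · convert hx using 1
        ext t; simp [Finset.mem_image, or_and_right, exists_or, eq_comm]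
      · convert hi using 1
        ext t; simp [Finset.mem_image, or_and_right, exists_or, eq_comm]
    have := (hφ _ hmem).2
    convert this using 1
    ext t; simp only [Finset.mem_image, Finset.mem_insert, Finset.mem_singleton]; grind
  have hA := aux_apex (fun x y => ap (g (φ (x, y))))
    (fun x y z i j k hx hi => (aux_edge _ _ _ (key x y z i j k hx hi)).1)
  refine aux_alg C hC hrank (fun y => fm (g (φ (0, y)))) ?_ (fun y => vc (g (φ (1, y)))) ?_
  · intro y
    obtain ⟨c, hc⟩ := (hA y).1
    simp only [hc]
    exact c.2
  · intro i j k hf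
    have E := fun y z (hx : ({0, y, z} : Finset (Fin 4)) ∈ K4minus) j k
      (hf : ({i, j, k} : Finset (Fin 7)) ∈ Fstar) =>
      (aux_edge _ _ _ (key 0 y z i j k hx hf)).2 (hA i).1
    have hf' : ({i, k, j} : Finset (Fin 7)) ∈ Fstar := by
      rwa [Finset.pair_comm k j]
    have m : ∀ y z : Fin 4, (({0, y, z} : Finset (Fin 4)) = {0,1,2} ∨
      ({0, y, z} : Finset (Fin 4)) = {0,1,3} ∨ ({0, y, z} : Finset (Fin 4)) = {0,2,3}) →
      ({0, y, z} : Finset (Fin 4)) ∈ K4minus := by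
      intro y z h
      simpa [K4minus] using h
    have e1 := E 1 2 (m _ _ (by decide)) j k hf
    have e2 := E 3 2 (m _ _ (by decide)) j k hf
    have e3 := E 3 1 (m _ _ (by decide)) j k hf
    have Q : ∀ a b c d : ZMod 2, a + b = 1 → c + b = 1 → c + d = 1 → a + d = 1 := by decide
    exact Q _ _ _ _ e1 e2 e3
end

section
/- Let U be a finite-dimensional 𝔽₂-vector space and let 𝒞 be a set of nonzero linear forms on U with dim_{𝔽₂} span(𝒞) ≥ 3. Then there exists a homomorphism from F := K4⁻ × F* to the cut template R(U,𝒞). -/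
open scoped Classical

def gval : Fin 3 → Fin 7 → ZMod 2 :=
  ![![1,1,0,0,1,0,0], ![1,0,0,0,1,0,0], ![1,1,1,0,0,0,0]]

def lab : Fin 7 → Fin 3 := ![0,0,1,1,2,2,2]

theorem fstar_key : ∀ x y z : Fin 7,
    (({x,y,z} : Finset (Fin 7)) = {0,1,2} ∨ ({x,y,z} : Finset (Fin 7)) = {0,1,3} ∨
     ({x,y,z} : Finset (Fin 7)) = {2,3,4} ∨ ({x,y,z} : Finset (Fin 7)) = {0,4,5} ∨
     ({x,y,z} : Finset (Fin 7)) = {1,4,6}) →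
    gval (lab x) y + gval (lab x) z = 1 := by
  decide +kernel

theorem edge_shape (e : Finset (Fin 4 × Fin 7)) (he : e ∈ F) :
    ∃ p q r : Fin 4 × Fin 7, e = {p,q,r} ∧ p.1 = 0 ∧ q.1 ≠ 0 ∧ r.1 ≠ 0 ∧
      gval (lab p.2) q.2 + gval (lab p.2) r.2 = 1 := by
  obtain ⟨hcard, h1, h2⟩ := he
  have h3 : (e.image Prod.fst).card = 3 ∧ 0 ∈ e.image Prod.fst := by
    simp only [K4minus, Set.mem_insert_iff, Set.mem_singleton_iff] at h1
    have h1' : e.image Prod.fst = {0,1,2} ∨ e.image Prod.fst = {0,1,3} ∨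
      e.image Prod.fst = {0,2,3} := by convert h1
    rcases h1' with h | h | h <;> rw [h] <;> decide
  obtain ⟨h3, h0⟩ := h3
  have hinj : Set.InjOn Prod.fst (e : Set (Fin 4 × Fin 7)) := by
    apply Finset.card_image_iff.mp
    rw [hcard, ← h3]
  obtain ⟨p, hp, hp0⟩ := Finset.mem_image.mp h0
  have hc2 : (e.erase p).card = 2 := by rw [Finset.card_erase_of_mem hp, hcard]
  obtain ⟨q, r, hqr, hE⟩ := Finset.card_eq_two.mp hc2
  have hq : q ∈ e.erase p := by rw [hE]; simp
  have hr : r ∈ e.erase p := by rw [hE]; simp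
  rw [Finset.mem_erase] at hq hr
  have heq : e = {p,q,r} := by rw [← Finset.insert_erase hp, hE]
  refine ⟨p, q, r, heq, hp0, ?_, ?_, ?_⟩
  · intro h
    exact hq.1 (hinj hq.2 hp (h.trans hp0.symm))
  · intro h
    exact hr.1 (hinj hr.2 hp (h.trans hp0.symm))
  · apply fstar_key
    have h4 : e.image Prod.snd = {p.2, q.2, r.2} := by
      rw [heq]; ext; simp [eq_comm]
    simp only [Fstar, Set.mem_insert_iff, Set.mem_singleton_iff] at h2
    rw [← h4]
    convert h2

theorem exists_forms (U : Type) [AddCommGroup U] [Module (ZMod 2) U]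
    [FiniteDimensional (ZMod 2) U] (C : Set (U →ₗ[ZMod 2] ZMod 2))
    (hrank : 3 ≤ Module.finrank (ZMod 2) ↥(Submodule.span (ZMod 2) C)) :
    ∃ c : Fin 3 → C, LinearIndependent (ZMod 2) (fun i => (c i : U →ₗ[ZMod 2] ZMod 2)) := by
  obtain ⟨f, hf, -, hli⟩ := Submodule.exists_fun_fin_finrank_span_eq (ZMod 2) C
  exact ⟨fun i => ⟨f (Fin.castLE hrank i), hf _⟩,
    hli.comp (Fin.castLE hrank) (Fin.castLE_injective hrank)⟩

theorem exists_vec (U : Type) [AddCommGroup U] [Module (ZMod 2) U]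
    (c : Fin 3 → (U →ₗ[ZMod 2] ZMod 2)) (hc : LinearIndependent (ZMod 2) c)
    (g : Fin 3 → ZMod 2) : ∃ u : U, ∀ i, c i u = g i := by
  have hs : Function.Surjective (LinearMap.pi c) := by
    rw [← LinearMap.range_eq_top, ← Subspace.dualAnnihilator_inj, Submodule.dualAnnihilator_top]
    rw [eq_bot_iff]
    intro φ hφ
    rw [Submodule.mem_dualAnnihilator] at hφ
    have h0 : ∑ i, φ (Pi.single i 1) • c i = 0 := by
      ext u
      have := hφ _ ⟨u, rfl⟩
      rw [LinearMap.pi_apply_eq_sum_univ] at this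
      have hsg : ∀ i : Fin 3, (fun j => if i = j then (1 : ZMod 2) else 0) = Pi.single i 1 := by
        intro i
        ext j
        simp [Pi.single_apply, eq_comm]
      simp only [hsg] at this
      simpa [mul_comm] using this
    have h1 := Fintype.linearIndependent_iff.mp hc _ h0
    rw [Submodule.mem_bot]
    ext i
    simpa using h1 i
  obtain ⟨u, hu⟩ := hs g
  exact ⟨u, fun i => congrFun hu i⟩

/-- If `𝒞` consists of nonzero linear forms and `dim span 𝒞 ≥ 3`, then there exists a
homomorphism from `F = K4⁻ × F*` to the cut template `R(U, 𝒞)`. -/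
theorem hom_F_to_rank_three_cut_template (U : Type) [AddCommGroup U] [Module (ZMod 2) U]
    [FiniteDimensional (ZMod 2) U] (C : Set (U →ₗ[ZMod 2] ZMod 2))
    (hC : ∀ c ∈ C, c ≠ 0)
    (hrank : 3 ≤ Module.finrank (ZMod 2) ↥(Submodule.span (ZMod 2) C)) :
    ∃ φ : Fin 4 × Fin 7 → ↥C ⊕ U, IsHomOn F (CutTemplate U C) φ := by
  obtain ⟨c, hc⟩ := exists_forms U C hrank
  choose f hf using fun y : Fin 7 => exists_vec U _ hc (fun i => gval i y)
  refine ⟨fun p => if p.1 = 0 then Sum.inl (c (lab p.2)) else Sum.inr (f p.2), ?_⟩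
  intro e he
  obtain ⟨p, q, r, rfl, hp, hq, hr, hg⟩ := edge_shape e he
  have h1 : (c (lab p.2) : U →ₗ[ZMod 2] ZMod 2) (f q.2 + f r.2) = 1 := by
    rw [map_add, hf, hf, hg]
  have hne : f q.2 ≠ f r.2 := by
    intro h
    rw [h, map_add, CharTwo.add_self_eq_zero] at h1
    exact zero_ne_one h1
  have key : ∀ S : Finset (↥C ⊕ U),
      S = {Sum.inl (c (lab p.2)), Sum.inr (f q.2), Sum.inr (f r.2)} →
      S.card = 3 ∧ S ∈ CutTemplate U C := by
    intro S hS
    refine ⟨?_, c (lab p.2), f q.2, f r.2, hne, h1, by rw [hS]⟩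
    rw [Finset.card_eq_three]
    exact ⟨_, _, _, by simp, by simp, by simpa using hne, hS⟩
  apply key
  ext
  simp [hp, hq, hr, eq_comm]
end

section
/- Let R_× := R(𝔽₂², {x, y}) be the cut template on U = 𝔽₂² with the two coordinate forms x and y. For every real α ∈ (0, 1/2) and every n, there exists an n-vertex blowup G_α(n) of R_× such that: (i) |G_α(n)| = (1/27)·n³ + o(n³) as n → ∞; and (ii) for every two distinct α, β ∈ (0, 1/2) there exist c > 0 and N such that for all n ≥ N, dist(G_α(n), G_β(n)) ≥ c·n³. -/
open scoped Classical

/-- The edit distance between two 3-graphs on the vertex set `Fin n`: the minimum,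
over relabellings `ψ`, of the number of edges in the symmetric difference. -/
noncomputable def editDist {n : ℕ} (G H : Set (Finset (Fin n))) : ℕ :=
  sInf {k | ∃ ψ : Equiv.Perm (Fin n), (symmDiff ((fun e => e.image ⇑ψ) '' G) H).ncard = k}

/-- The two coordinate forms `{x, y}` on `𝔽₂²`. -/
noncomputable def Ccross : Set ((ZMod 2 × ZMod 2) →ₗ[ZMod 2] ZMod 2) :=
  {LinearMap.fst (ZMod 2) (ZMod 2) (ZMod 2), LinearMap.snd (ZMod 2) (ZMod 2) (ZMod 2)}

/-- The cut template `R_× = R(𝔽₂², {x, y})`. -/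
noncomputable def Rcross : Set (Finset (↥Ccross ⊕ (ZMod 2 × ZMod 2))) :=
  CutTemplate (ZMod 2 × ZMod 2) Ccross


namespace CrossAux

/-- Real-valued indicator of an ordered triple spanning an edge. -/
noncomputable def ind {V : Type*} [DecidableEq V] (H : Set (Finset V)) (u v w : V) : ℝ :=
  if ({u, v, w} : Finset V) ∈ H then 1 else 0

/-- Sum of squared codegrees. -/
noncomputable def S {V : Type*} [Fintype V] [DecidableEq V] (H : Set (Finset V)) : ℝ :=
  ∑ u, ∑ v, (∑ w, ind H u v w) ^ 2

lemma ind_nonneg {V : Type*} [DecidableEq V] (H : Set (Finset V)) (u v w : V) : 0 ≤ ind H u v w := by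
  unfold ind; split_ifs <;> norm_num

lemma ind_le_one {V : Type*} [DecidableEq V] (H : Set (Finset V)) (u v w : V) : ind H u v w ≤ 1 := by
  unfold ind; split_ifs <;> norm_num

lemma count_six {V : Type*} [Fintype V] [DecidableEq V] (e : Finset V) (he : e.card = 3) :
    ∑ u : V, ∑ v : V, ∑ w : V, (if ({u, v, w} : Finset V) = e then (1 : ℝ) else 0) = 6 := by
  obtain ⟨a, b, c, hab, hac, hbc, rfl⟩ := Finset.card_eq_three.mp he
  have h : (Finset.univ.filter
      (fun p : V × V × V => ({p.1, p.2.1, p.2.2} : Finset V) = {a, b, c})) =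
      {(a, b, c), (a, c, b), (b, a, c), (b, c, a), (c, a, b), (c, b, a)} := by
    ext ⟨u, v, w⟩
    simp only [Finset.mem_filter, Finset.mem_univ, true_and, Finset.mem_insert,
      Finset.mem_singleton, Prod.mk.injEq]
    constructor
    · intro h
      have hu : u ∈ ({a, b, c} : Finset V) := by rw [← h]; simp
      have hv : v ∈ ({a, b, c} : Finset V) := by rw [← h]; simp
      have hw : w ∈ ({a, b, c} : Finset V) := by rw [← h]; simp
      have ha : a ∈ ({u, v, w} : Finset V) := by rw [h]; simp
      have hb : b ∈ ({u, v, w} : Finset V) := by rw [h]; simp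
      have hc : c ∈ ({u, v, w} : Finset V) := by rw [h]; simp
      simp only [Finset.mem_insert, Finset.mem_singleton] at hu hv hw ha hb hc
      clear h
      grind
    · rintro (⟨rfl, rfl, rfl⟩ | ⟨rfl, rfl, rfl⟩ | ⟨rfl, rfl, rfl⟩ | ⟨rfl, rfl, rfl⟩ |
        ⟨rfl, rfl, rfl⟩ | ⟨rfl, rfl, rfl⟩) <;>
      · ext x
        simp only [Finset.mem_insert, Finset.mem_singleton]
        try tauto
  have h2 : ∑ u : V, ∑ v : V, ∑ w : V, (if ({u, v, w} : Finset V) = {a, b, c} then (1 : ℝ) else 0)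
      = ∑ p : V × V × V, (if ({p.1, p.2.1, p.2.2} : Finset V) = {a, b, c} then (1 : ℝ) else 0) := by
    rw [Fintype.sum_prod_type]
    refine Finset.sum_congr rfl fun u _ => ?_
    rw [Fintype.sum_prod_type]
  rw [h2, Finset.sum_boole, h]
  have : ({(a, b, c), (a, c, b), (b, a, c), (b, c, a), (c, a, b), (c, b, a)} :
    Finset (V × V × V)).card = 6 := by
    rw [Finset.card_insert_of_notMem, Finset.card_insert_of_notMem, Finset.card_insert_of_notMem,
      Finset.card_insert_of_notMem, Finset.card_insert_of_notMem, Finset.card_singleton] <;>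
    simp <;> grind
  rw [this]; norm_num

lemma sum_ind {V : Type*} [Fintype V] [DecidableEq V] (D : Set (Finset V)) (hD : ∀ e ∈ D, e.card = 3) :
    ∑ u, ∑ v, ∑ w, ind D u v w = 6 * (D.ncard : ℝ) := by
  have h1 : ∀ u v w, ind D u v w =
      ∑ e ∈ D.toFinset, (if ({u, v, w} : Finset V) = e then (1 : ℝ) else 0) := by
    intro u v w
    rw [Finset.sum_ite_eq]
    simp [ind]
  simp only [h1]
  have h2 : ∑ u : V, ∑ v : V, ∑ w : V,
      ∑ e ∈ D.toFinset, (if ({u, v, w} : Finset V) = e then (1 : ℝ) else 0)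
      = ∑ e ∈ D.toFinset, ∑ u : V, ∑ v : V, ∑ w : V,
        (if ({u, v, w} : Finset V) = e then (1 : ℝ) else 0) := by
    refine (Finset.sum_congr rfl fun u _ => ?_).trans Finset.sum_comm
    refine (Finset.sum_congr rfl fun v _ => ?_).trans Finset.sum_comm
    exact Finset.sum_comm
  rw [h2, Finset.sum_congr rfl (fun e he => count_six e (hD e (by simpa using he)))]
  rw [Finset.sum_const, Set.ncard_eq_toFinset_card']
  simp [mul_comm]

lemma S_diff {n : ℕ} (G H : Set (Finset (Fin n))) (hG : ∀ e ∈ G, e.card = 3)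
    (hH : ∀ e ∈ H, e.card = 3) :
    |S G - S H| ≤ 12 * (n : ℝ) * ((symmDiff G H).ncard : ℝ) := by
  have hD : ∀ e ∈ symmDiff G H, e.card = 3 := by
    intro e he
    rcases he with ⟨h, _⟩ | ⟨h, _⟩
    · exact hG e h
    · exact hH e h
  have hb : ∀ (K : Set (Finset (Fin n))) u v, 0 ≤ ∑ w, ind K u v w ∧ ∑ w, ind K u v w ≤ n := by
    intro K u v
    refine ⟨Finset.sum_nonneg fun w _ => ind_nonneg _ _ _ _, ?_⟩
    refine (Finset.sum_le_sum fun w _ => ind_le_one K u v w).trans ?_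
    simp
  have hi : ∀ u v w, |ind G u v w - ind H u v w| = ind (symmDiff G H) u v w := by
    intro u v w
    unfold ind
    by_cases h1 : ({u, v, w} : Finset (Fin n)) ∈ G <;>
    by_cases h2 : ({u, v, w} : Finset (Fin n)) ∈ H <;> simp [Set.mem_symmDiff, h1, h2]
  have key : ∀ u v, |(∑ w, ind G u v w) ^ 2 - (∑ w, ind H u v w) ^ 2| ≤
      2 * n * ∑ w, ind (symmDiff G H) u v w := by
    intro u v
    have hd : |(∑ w, ind G u v w) - ∑ w, ind H u v w| ≤ ∑ w, ind (symmDiff G H) u v w := by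
      rw [← Finset.sum_sub_distrib]
      refine (Finset.abs_sum_le_sum_abs _ _).trans ?_
      simp only [hi]; exact le_rfl
    have e1 := hb G u v
    have e2 := hb H u v
    rw [sq_sub_sq, abs_mul]
    refine mul_le_mul ?_ hd (abs_nonneg _) (by positivity)
    rw [abs_of_nonneg (by linarith)]
    linarith
  unfold S
  rw [← Finset.sum_sub_distrib]
  refine (Finset.abs_sum_le_sum_abs _ _).trans ?_
  have : ∀ u, |∑ v, (∑ w, ind G u v w) ^ 2 - ∑ v, (∑ w, ind H u v w) ^ 2| ≤
      ∑ v, 2 * n * ∑ w, ind (symmDiff G H) u v w := by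
    intro u
    rw [← Finset.sum_sub_distrib]
    exact (Finset.abs_sum_le_sum_abs _ _).trans (Finset.sum_le_sum fun v _ => key u v)
  refine (Finset.sum_le_sum fun u _ => this u).trans ?_
  simp only [← Finset.mul_sum]
  rw [sum_ind _ hD]
  apply le_of_eq; ring

lemma S_perm {n : ℕ} (G : Set (Finset (Fin n))) (ψ : Equiv.Perm (Fin n)) :
    S ((fun e => e.image ⇑ψ) '' G) = S G := by
  have h : ∀ u v w, ind ((fun e => e.image ⇑ψ) '' G) (ψ u) (ψ v) (ψ w) = ind G u v w := by
    intro u v w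
    unfold ind
    have hinj : Function.Injective (fun e : Finset (Fin n) => e.image ⇑ψ) :=
      Finset.image_injective ψ.injective
    have : ({ψ u, ψ v, ψ w} : Finset (Fin n)) = (fun e : Finset (Fin n) => e.image ⇑ψ) {u, v, w} := by
      simp [Finset.image_insert]
    rw [this, hinj.mem_set_image]
  unfold S
  rw [← Equiv.sum_comp ψ]
  refine Finset.sum_congr rfl fun u _ => ?_
  rw [← Equiv.sum_comp ψ]
  refine Finset.sum_congr rfl fun v _ => ?_
  rw [← Equiv.sum_comp ψ]
  simp only [h]

/-- Explicit list of the edges of the template on six labelled vertices. -/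
def T6 : Finset (Finset (Fin 6)) :=
  {{0,2,4}, {0,2,5}, {0,3,4}, {0,3,5}, {1,2,3}, {1,2,5}, {1,4,3}, {1,4,5}}

noncomputable def cx : ↥Ccross := ⟨LinearMap.fst _ _ _, Or.inl rfl⟩
noncomputable def cy : ↥Ccross := ⟨LinearMap.snd _ _ _, Or.inr rfl⟩

noncomputable def phi : Fin 6 → ↥Ccross ⊕ (ZMod 2 × ZMod 2) :=
  ![Sum.inl cx, Sum.inl cy, Sum.inr (0,0), Sum.inr (0,1), Sum.inr (1,0), Sum.inr (1,1)]

lemma cxy : cx ≠ cy := by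
  intro h
  have h1 := congrArg (fun c : ↥Ccross => (c : (ZMod 2 × ZMod 2) →ₗ[ZMod 2] ZMod 2) (1, 0)) h
  simp [cx, cy] at h1

lemma phi_inj : Function.Injective phi := by
  intro i j h
  have h1 := cxy
  have h2 := cxy.symm
  fin_cases i <;> fin_cases j <;> first | rfl | (exfalso; simp [phi, h1, h2] at h)

def ub (u : ZMod 2 × ZMod 2) : Fin 6 :=
  if u.1 = 0 then (if u.2 = 0 then 2 else 3) else (if u.2 = 0 then 4 else 5)

lemma phi_ub (u : ZMod 2 × ZMod 2) : phi (ub u) = Sum.inr u := by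
  obtain ⟨a, b⟩ := u
  fin_cases a <;> fin_cases b <;> rfl

lemma T6_x : ∀ u v : ZMod 2 × ZMod 2, (u + v).1 = 1 → ({0, ub u, ub v} : Finset (Fin 6)) ∈ T6 := by
  decide

lemma T6_y : ∀ u v : ZMod 2 × ZMod 2, (u + v).2 = 1 → ({1, ub u, ub v} : Finset (Fin 6)) ∈ T6 := by
  decide

lemma T6_card : ∀ e ∈ T6, e.card = 3 := by decide

lemma T6_sub : ∀ e ∈ T6, ∃ u v : ZMod 2 × ZMod 2, u ≠ v ∧
    (((u + v).1 = 1 ∧ e = {0, ub u, ub v}) ∨ ((u + v).2 = 1 ∧ e = {1, ub u, ub v})) := by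
  decide

lemma mem_cut {U : Type*} [AddCommGroup U] [Module (ZMod 2) U]
    (C : Set (U →ₗ[ZMod 2] ZMod 2)) [DecidableEq (↥C ⊕ U)] (e : Finset (↥C ⊕ U)) :
    e ∈ CutTemplate U C ↔ ∃ (c : ↥C) (u v : U), u ≠ v ∧
      (c : U →ₗ[ZMod 2] ZMod 2) (u + v) = 1 ∧ e = {Sum.inl c, Sum.inr u, Sum.inr v} := by
  unfold CutTemplate
  rw [Set.mem_ofPred_eq]
  convert Iff.rfl

lemma mem_blowup {α β : Type*} [DecidableEq α] (T : Set (Finset α)) (g : β → α) (e : Finset β) :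
    e ∈ Blowup T g ↔ e.card = 3 ∧ e.image g ∈ T := by
  unfold Blowup
  rw [Set.mem_ofPred_eq]
  convert Iff.rfl

lemma mem_Rcross (e : Finset (Fin 6)) : e.image phi ∈ Rcross ↔ e ∈ T6 := by
  have himg : ∀ i u v, Finset.image phi {i, ub u, ub v} = {phi i, Sum.inr u, Sum.inr v} := by
    intro i u v
    simp [Finset.image_insert, phi_ub]
  constructor
  · intro h
    obtain ⟨⟨c, hc⟩, u, v, huv, hcuv, he⟩ := (mem_cut _ _).mp h
    rcases hc with rfl | hc
    · have : e = {0, ub u, ub v} := by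
        apply Finset.image_injective phi_inj
        rw [he, himg]; rfl
      rw [this]; exact T6_x u v hcuv
    · rw [Set.mem_singleton_iff] at hc
      subst hc
      have : e = {1, ub u, ub v} := by
        apply Finset.image_injective phi_inj
        rw [he, himg]; rfl
      rw [this]; exact T6_y u v hcuv
  · intro he
    obtain ⟨u, v, huv, ⟨h, rfl⟩ | ⟨h, rfl⟩⟩ := T6_sub e he
    · exact (mem_cut _ _).mpr ⟨cx, u, v, huv, h, himg _ _ _⟩
    · exact (mem_cut _ _).mpr ⟨cy, u, v, huv, h, himg _ _ _⟩

lemma blowup_ind {n : ℕ} (k : Fin n → Fin 6) (u v w : Fin n) :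
    ind (Blowup Rcross (phi ∘ k)) u v w = ind (T6 : Set (Finset (Fin 6))) (k u) (k v) (k w) := by
  unfold ind
  congr 1
  rw [eq_iff_iff]
  have h1 : Finset.image (phi ∘ k) {u, v, w} = Finset.image phi {k u, k v, k w} := by
    simp [Finset.image_insert]
  rw [mem_blowup, h1, mem_Rcross, Finset.mem_coe]
  refine ⟨fun h => h.2, fun h => ⟨?_, h⟩⟩
  have h3 := T6_card _ h
  have h4 : ({k u, k v, k w} : Finset (Fin 6)) = Finset.image k {u, v, w} := by
    simp [Finset.image_insert]
  rw [h4] at h3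
  have h5 := Finset.card_image_le (s := {u, v, w}) (f := k)
  have h6 := Finset.card_le_three (a := u) (b := v) (c := w)
  omega

/-- Sizes of the parts. -/
noncomputable def cnt {n : ℕ} (k : Fin n → Fin 6) (i : Fin 6) : ℝ :=
  ((Finset.univ.filter (fun v => k v = i)).card : ℝ)

lemma sum_fiber {n : ℕ} (k : Fin n → Fin 6) (f : Fin 6 → ℝ) :
    ∑ v, f (k v) = ∑ i, cnt k i * f i := by
  rw [← Finset.sum_fiberwise (s := Finset.univ) (g := k)]
  refine Finset.sum_congr rfl fun i _ => ?_
  rw [Finset.sum_congr rfl (g := fun _ => f i)]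
  · simp [cnt]
  · intro x hx
    simp at hx
    rw [hx]

noncomputable def codeg (x : Fin 6 → ℝ) (i j : Fin 6) : ℝ :=
  ∑ l, x l * ind (T6 : Set (Finset (Fin 6))) i j l

noncomputable def Q (x : Fin 6 → ℝ) : ℝ := ∑ i, x i * ∑ j, x j * codeg x i j
noncomputable def P (x : Fin 6 → ℝ) : ℝ := ∑ i, x i * ∑ j, x j * codeg x i j ^ 2

lemma blowup_E {n : ℕ} (k : Fin n → Fin 6) :
    6 * ((Blowup Rcross (phi ∘ k)).ncard : ℝ) = Q (cnt k) := by
  rw [← sum_ind _ (fun e he => he.1)]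
  simp only [blowup_ind]
  unfold Q codeg
  rw [← sum_fiber k (fun i => ∑ j, cnt k j * ∑ l, cnt k l * ind (T6 : Set (Finset (Fin 6))) i j l)]
  refine Finset.sum_congr rfl fun u _ => ?_
  rw [← sum_fiber k (fun j => ∑ l, cnt k l * ind (T6 : Set (Finset (Fin 6))) (k u) j l)]
  refine Finset.sum_congr rfl fun v _ => ?_
  rw [← sum_fiber k (fun l => ind (T6 : Set (Finset (Fin 6))) (k u) (k v) l)]

lemma blowup_S {n : ℕ} (k : Fin n → Fin 6) :
    S (Blowup Rcross (phi ∘ k)) = P (cnt k) := by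
  unfold S
  simp only [blowup_ind]
  unfold P codeg
  rw [← sum_fiber k (fun i => ∑ j, cnt k j *
    (∑ l, cnt k l * ind (T6 : Set (Finset (Fin 6))) i j l) ^ 2)]
  refine Finset.sum_congr rfl fun u _ => ?_
  rw [← sum_fiber k (fun j => (∑ l, cnt k l * ind (T6 : Set (Finset (Fin 6))) (k u) j l) ^ 2)]
  refine Finset.sum_congr rfl fun v _ => ?_
  rw [← sum_fiber k (fun l => ind (T6 : Set (Finset (Fin 6))) (k u) (k v) l)]

lemma codeg_smul (x : Fin 6 → ℝ) (c : ℝ) (i j : Fin 6) :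
    codeg (fun l => x l / c) i j = codeg x i j / c := by
  unfold codeg
  rw [Finset.sum_div]
  exact Finset.sum_congr rfl fun l _ => by ring

lemma Q_smul (x : Fin 6 → ℝ) (c : ℝ) : Q (fun l => x l / c) = Q x / c ^ 3 := by
  unfold Q
  simp only [codeg_smul, Finset.mul_sum, Finset.sum_div]
  exact Finset.sum_congr rfl fun l _ => Finset.sum_congr rfl fun m _ => by ring

lemma P_smul (x : Fin 6 → ℝ) (c : ℝ) : P (fun l => x l / c) = P x / c ^ 4 := by
  unfold P
  simp only [codeg_smul, Finset.mul_sum, Finset.sum_div]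
  exact Finset.sum_congr rfl fun l _ => Finset.sum_congr rfl fun m _ => by ring

lemma codeg_cont (i j : Fin 6) : Continuous (fun x => codeg x i j) := by
  unfold codeg; fun_prop

lemma Q_cont : Continuous Q := by
  have := codeg_cont
  unfold Q; fun_prop

lemma P_cont : Continuous P := by
  have := codeg_cont
  unfold P; fun_prop

/-- limiting weights -/
noncomputable def wt (α : ℝ) : Fin 6 → ℝ := ![α / 3, (1 - α) / 3, 1 / 6, 1 / 6, 1 / 6, 1 / 6]

lemma codeg_eq (x : Fin 6 → ℝ) (i j : Fin 6) : codeg x i j =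
    ![![0, 0, x 4 + x 5, x 4 + x 5, x 2 + x 3, x 2 + x 3],
      ![0, 0, x 3 + x 5, x 2 + x 4, x 3 + x 5, x 2 + x 4],
      ![x 4 + x 5, x 3 + x 5, 0, x 1, x 0, x 0 + x 1],
      ![x 4 + x 5, x 2 + x 4, x 1, 0, x 0 + x 1, x 0],
      ![x 2 + x 3, x 3 + x 5, x 0, x 0 + x 1, 0, x 1],
      ![x 2 + x 3, x 2 + x 4, x 0 + x 1, x 0, x 1, 0]] i j := by
  have hb : ∀ i j l, ind (T6 : Set (Finset (Fin 6))) i j l =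
      if (decide (({i, j, l} : Finset (Fin 6)) ∈ T6)) = true then 1 else 0 := by
    intro i j l
    simp [ind]
  unfold codeg
  simp only [Fin.sum_univ_six, hb]
  fin_cases i <;> fin_cases j <;> simp +decide

lemma Q_wt (α : ℝ) : Q (wt α) = 6 / 27 := by
  unfold Q
  simp only [codeg_eq, Fin.sum_univ_six]
  simp [wt]
  ring

lemma P_wt (α β : ℝ) : P (wt α) - P (wt β) = 2 / 81 * (α - β) * (α + β - 1) := by
  unfold P
  simp only [codeg_eq, Fin.sum_univ_six]
  simp [wt]
  ring

open Filter Topology in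
lemma exists_k (x : Fin 6 → ℝ) (hx : ∀ i, 0 ≤ x i) (hs : ∑ i, x i = 1) :
    ∃ k : (n : ℕ) → Fin n → Fin 6,
      Tendsto (fun n : ℕ => fun i => cnt (k n) i / (n : ℝ)) atTop (𝓝 x) := by
  have hle : ∀ n : ℕ, ∑ i, ⌊x i * n⌋₊ ≤ n := by
    intro n
    have : ((∑ i, ⌊x i * n⌋₊ : ℕ) : ℝ) ≤ n := by
      push_cast
      calc ∑ i, (⌊x i * n⌋₊ : ℝ) ≤ ∑ i, x i * n :=
            Finset.sum_le_sum fun i _ => Nat.floor_le (mul_nonneg (hx i) (Nat.cast_nonneg n))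
        _ = n := by rw [← Finset.sum_mul, hs, one_mul]
    exact_mod_cast this
  let N : ℕ → Fin 6 → ℕ := fun n i => ⌊x i * n⌋₊ + if i = 0 then n - ∑ j, ⌊x j * n⌋₊ else 0
  have hN : ∀ n, ∑ i, N n i = n := by
    intro n
    simp only [N, Finset.sum_add_distrib, Finset.sum_ite_eq', Finset.mem_univ, if_true]
    have := hle n
    omega
  have hex : ∀ n, ∃ k : Fin n → Fin 6, ∀ i, cnt k i = N n i := by
    intro n
    have hc : Fintype.card (Fin n) = Fintype.card (Σ i : Fin 6, Fin (N n i)) := by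
      simp [hN]
    let e := Fintype.equivOfCardEq hc
    refine ⟨fun v => (e v).1, fun i => ?_⟩
    unfold cnt
    congr 1
    have : (Finset.univ.filter (fun v => (e v).1 = i)) =
        (Finset.univ : Finset (Fin (N n i))).image (fun t => e.symm ⟨i, t⟩) := by
      ext v
      simp only [Finset.mem_filter, Finset.mem_univ, true_and, Finset.mem_image]
      constructor
      · intro h
        subst h
        exact ⟨(e v).2, by simp⟩
      · rintro ⟨t, rfl⟩
        simp
    rw [this, Finset.card_image_of_injective]
    · simp
    · intro s t h
      simpa using h
  choose k hk using hex
  refine ⟨k, ?_⟩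
  have hf : ∀ i, Tendsto (fun n : ℕ => (⌊x i * n⌋₊ : ℝ) / (n : ℝ)) atTop (𝓝 (x i)) := fun i =>
    (tendsto_nat_floor_mul_div_atTop (hx i)).comp tendsto_natCast_atTop_atTop
  have hone : Tendsto (fun n : ℕ => (n : ℝ) / n) atTop (𝓝 1) := by
    refine tendsto_const_nhds.congr' ?_
    filter_upwards [eventually_gt_atTop 0] with n hn
    have : (n : ℝ) ≠ 0 := by positivity
    field_simp
  have hrest : Tendsto (fun n : ℕ => (n : ℝ) / n - ∑ j, (⌊x j * n⌋₊ : ℝ) / (n : ℝ)) atTop (𝓝 0) := by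
    have := hone.sub (tendsto_finsetSum Finset.univ fun j _ => hf j)
    rwa [hs, sub_self] at this
  rw [tendsto_pi_nhds]
  intro i
  by_cases hi : i = 0
  · have := (hf i).add hrest
    rw [add_zero] at this
    refine this.congr fun n => ?_
    rw [hk]
    simp only [N, hi, if_true]
    rw [Nat.cast_add, Nat.cast_sub (hle n)]
    push_cast
    rw [← Finset.sum_div]
    ring
  · refine (hf i).congr fun n => ?_
    rw [hk]
    simp [N, hi]

end CrossAux

open Asymptotics Filter in
/-- For every `α ∈ (0, 1/2)` and every `n` there is an `n`-vertex blowup `G α n` of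
`R_×` with `|G α n| = n³/27 + o(n³)`, such that for distinct `α, β ∈ (0, 1/2)` the
graphs `G α n` and `G β n` are at edit distance at least `c n³` eventually. -/
theorem crossed_blowups_far_apart :
    ∃ G : ℝ → (n : ℕ) → Set (Finset (Fin n)),
      (∀ α, α ∈ Set.Ioo (0 : ℝ) (1 / 2) → ∀ n : ℕ,
        ∃ g : Fin n → ↥Ccross ⊕ (ZMod 2 × ZMod 2), G α n = Blowup Rcross g) ∧
      (∀ α, α ∈ Set.Ioo (0 : ℝ) (1 / 2) →
        (fun n : ℕ => ((G α n).ncard : ℝ) - (n : ℝ) ^ 3 / 27)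
          =o[atTop] fun n : ℕ => (n : ℝ) ^ 3) ∧
      (∀ α, α ∈ Set.Ioo (0 : ℝ) (1 / 2) → ∀ β, β ∈ Set.Ioo (0 : ℝ) (1 / 2) → α ≠ β →
        ∃ c : ℝ, 0 < c ∧ ∃ N : ℕ, ∀ n : ℕ, N ≤ n →
          c * (n : ℝ) ^ 3 ≤ (editDist (G α n) (G β n) : ℝ)) := by
  have hk0 : ∀ α : ℝ, α ∈ Set.Ioo (0 : ℝ) (1 / 2) → ∃ k : (n : ℕ) → Fin n → Fin 6,
      Tendsto (fun n : ℕ => fun i => CrossAux.cnt (k n) i / (n : ℝ)) atTop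
        (nhds (CrossAux.wt α)) := by
    intro α hα
    obtain ⟨h0, h1⟩ := hα
    apply CrossAux.exists_k
    · intro i
      fin_cases i <;> simp [CrossAux.wt] <;> linarith
    · simp [Fin.sum_univ_six, CrossAux.wt]
      ring
  choose! k hk using hk0
  refine ⟨fun α n => Blowup Rcross (CrossAux.phi ∘ k α n), fun α _ n => ⟨_, rfl⟩, ?_, ?_⟩
  · intro α hα
    have h1 := (CrossAux.Q_cont.tendsto _).comp (hk α hα)
    rw [CrossAux.Q_wt] at h1
    rw [isLittleO_iff_tendsto']
    · have h2 := (h1.div_const 6).sub_const (1 / 27)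
      have h3 : (6 / 27 / 6 - 1 / 27 : ℝ) = 0 := by norm_num
      rw [h3] at h2
      refine h2.congr' ?_
      filter_upwards [eventually_gt_atTop 0] with n hn
      have hn' : (n : ℝ) ≠ 0 := by positivity
      simp only [Function.comp_apply]
      rw [CrossAux.Q_smul, ← CrossAux.blowup_E]
      field_simp
    · filter_upwards [eventually_gt_atTop 0] with n hn h
      have hn' : (n : ℝ) ^ 3 ≠ 0 := by positivity
      exact absurd h hn'
  · intro α hα β hβ hab
    have h1 := (CrossAux.P_cont.tendsto _).comp (hk α hα)
    have h2 := (CrossAux.P_cont.tendsto _).comp (hk β hβ)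
    have h3 := (h1.sub h2).abs
    set δ : ℝ := |CrossAux.P (CrossAux.wt α) - CrossAux.P (CrossAux.wt β)| with hδ
    have hpos : 0 < δ := by
      rw [hδ, CrossAux.P_wt, abs_pos]
      have e1 : α - β ≠ 0 := sub_ne_zero.mpr hab
      have e2 : α + β - 1 ≠ 0 := by
        have := hα.2
        have := hβ.2
        intro h
        linarith
      exact mul_ne_zero (mul_ne_zero (by norm_num) e1) e2
    have h4 := h3.eventually (lt_mem_nhds (half_lt_self hpos))
    obtain ⟨N, hN⟩ := eventually_atTop.mp (h4.and (eventually_gt_atTop 0))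
    refine ⟨δ / 24, by positivity, N, fun n hn => ?_⟩
    obtain ⟨h5, hn0⟩ := hN n hn
    have hn' : (0 : ℝ) < n := by exact_mod_cast hn0
    simp only [Function.comp_apply] at h5
    rw [CrossAux.P_smul, CrossAux.P_smul, ← CrossAux.blowup_S, ← CrossAux.blowup_S,
      ← sub_div, abs_div, abs_of_pos (by positivity : (0 : ℝ) < (n : ℝ) ^ 4),
      lt_div_iff₀ (by positivity)] at h5
    obtain ⟨ψ, hψ⟩ := Nat.sInf_mem (s := {m | ∃ ψ : Equiv.Perm (Fin n),
      (symmDiff ((fun e => e.image ⇑ψ) '' (Blowup Rcross (CrossAux.phi ∘ k α n)))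
        (Blowup Rcross (CrossAux.phi ∘ k β n))).ncard = m}) ⟨_, 1, rfl⟩
    have h6 := CrossAux.S_diff ((fun e => e.image ⇑ψ) '' (Blowup Rcross (CrossAux.phi ∘ k α n)))
        (Blowup Rcross (CrossAux.phi ∘ k β n))
        (by
          rintro _ ⟨e, he, rfl⟩
          simp only []
          rw [Finset.card_image_of_injective _ ψ.injective]
          exact he.1)
        (fun e he => he.1)
    rw [CrossAux.S_perm, hψ] at h6
    change _ ≤ 12 * (n : ℝ) * ((editDist (Blowup Rcross (CrossAux.phi ∘ k α n))
      (Blowup Rcross (CrossAux.phi ∘ k β n)) : ℕ) : ℝ) at h6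
    have h7 := h5.trans_le h6
    have h8 : (12 * (n : ℝ)) * (δ / 24 * (n : ℝ) ^ 3) ≤ 12 * (n : ℝ) *
      ((editDist (Blowup Rcross (CrossAux.phi ∘ k α n))
      (Blowup Rcross (CrossAux.phi ∘ k β n)) : ℕ) : ℝ) := by
      refine le_trans (le_of_eq ?_) h7.le
      ring
    exact le_of_mul_le_mul_left h8 (by positivity)
end

section
/- The 3-graph F := K4⁻ × F* is not tripartite: there is no map c from the vertex set of F to {1,2,3} such that every edge of F receives three distinct values under c. Consequently, every 3-partite 3-graph (in particular the complete balanced tripartite 3-graph S_3(n)) contains no subgraph isomorphic to F. -/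
open scoped Classical

lemma shadowK : ∀ i i' : Fin 4, i ≠ i' → ∃ k : Fin 4,
    ({i, i', k} : Finset (Fin 4)) = {0,1,2} ∨ ({i, i', k} : Finset (Fin 4)) = {0,1,3} ∨
      ({i, i', k} : Finset (Fin 4)) = {0,2,3} := by decide

lemma shadowF : ∀ i i' : Fin 4, i ≠ i' → ∃ k : Fin 7,
    (k ≠ i.castLE (by decide) ∧ k ≠ i'.castLE (by decide)) ∧
    (({i.castLE (by decide), i'.castLE (by decide), k} : Finset (Fin 7)) = {0,1,2} ∨
    ({i.castLE (by decide), i'.castLE (by decide), k} : Finset (Fin 7)) = {0,1,3} ∨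
    ({i.castLE (by decide), i'.castLE (by decide), k} : Finset (Fin 7)) = {2,3,4} ∨
    ({i.castLE (by decide), i'.castLE (by decide), k} : Finset (Fin 7)) = {0,4,5} ∨
    ({i.castLE (by decide), i'.castLE (by decide), k} : Finset (Fin 7)) = {1,4,6}) := by decide

lemma no_col (c : Fin 4 × Fin 7 → Fin 3) (h : ∀ e ∈ F, (e.image c).card = 3) : False := by
  have key : ∀ i i' j j' : Fin 4, i ≠ i' → j ≠ j' →
      c (i, j.castLE (by decide)) ≠ c (i', j'.castLE (by decide)) := by
    intro i i' j j' hi hj heq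
    obtain ⟨k, hk⟩ := shadowK i i' hi
    obtain ⟨l, ⟨hl1, hl2⟩, hl⟩ := shadowF j j' hj
    have h3 := h {(i, j.castLE (by decide)), (i', j'.castLE (by decide)), (k, l)} ?_
    · rw [Finset.image_insert, Finset.image_insert, Finset.image_singleton, heq,
        Finset.insert_eq_of_mem (by simp)] at h3
      have := Finset.card_le_two (a := c (i', j'.castLE (by decide))) (b := c (k, l))
      omega
    · refine ⟨?_, ?_, ?_⟩
      · rw [Finset.card_eq_three]
        refine ⟨_, _, _, ?_, ?_, ?_, rfl⟩
        · simp [hi]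
        · intro h; exact hl1 (congrArg Prod.snd h).symm
        · intro h; exact hl2 (congrArg Prod.snd h).symm
      · simp only [Finset.image_insert, Finset.image_singleton, K4minus,
          Set.mem_insert_iff, Set.mem_singleton_iff]
        convert hk
      · simp only [Finset.image_insert, Finset.image_singleton, Fstar,
          Set.mem_insert_iff, Set.mem_singleton_iff]
        convert hl
  have rep : ∀ i : Fin 4, ∃ r : Fin 3, ∃ j j' : Fin 4, j ≠ j' ∧
      c (i, j.castLE (by decide)) = r ∧ c (i, j'.castLE (by decide)) = r := by
    intro i
    obtain ⟨j, j', hj, e⟩ := Fintype.exists_ne_map_eq_of_card_lt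
      (fun j : Fin 4 => c (i, j.castLE (by decide))) (by simp)
    exact ⟨_, j, j', hj, rfl, e.symm⟩
  choose r j j' hj h1 h2 using rep
  obtain ⟨i, i', hi, e⟩ := Fintype.exists_ne_map_eq_of_card_lt r (by simp)
  by_cases hk : j i = j i'
  · exact key i i' (j' i) (j i') hi (fun q => hj i (hk.trans q.symm))
      ((h2 i).trans (e.trans (h1 i').symm))
  · exact key i i' (j i) (j i') hi hk ((h1 i).trans (e.trans (h1 i').symm))

/-- `F = K4⁻ × F*` is not tripartite, and consequently every 3-partite 3-graph
(one in which some 3-colouring of the vertices makes every edge receive three distinct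
colours) contains no subgraph isomorphic to `F`. -/
theorem F_not_tripartite :
    (¬ ∃ c : Fin 4 × Fin 7 → Fin 3, ∀ e ∈ F, (e.image c).card = 3) ∧
      ∀ (β : Type) (H : Set (Finset β)), IsThreeGraph H →
        (∃ P : β → Fin 3, ∀ e ∈ H, (e.image P).card = 3) → ¬ ContainsCopy F H := by
  refine ⟨fun ⟨c, hc⟩ => no_col c hc, ?_⟩
  rintro β H - ⟨P, hP⟩ ⟨φ, -, hφ⟩
  refine no_col (P ∘ φ) fun e he => ?_
  have := hP _ (hφ e he)
  rw [Finset.image_image] at this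
  exact this
end

section
/- Let T be a 3-graph such that: (i) T contains no subgraph isomorphic to K4⁻; (ii) there is no homomorphism from F* to T; and (iii) the shadow ∂T is complete, i.e., every pair of distinct vertices of T is contained in some edge of T. Then there is no homomorphism from F5 to T. -/
open scoped Classical

/-- The generalized triangle `F₅`, on vertices `1,…,5` (represented by `0,…,4`),
with edges `123, 124, 345`. -/
def F5 : Set (Finset (Fin 5)) := {{0,1,2}, {0,1,3}, {2,3,4}}

theorem third_vertex {α : Type} (T : Set (Finset α)) (h3 : IsThreeGraph T)
    (hshadow : ∀ x y : α, x ≠ y → ∃ e ∈ T, x ∈ e ∧ y ∈ e) (x y : α) (h : x ≠ y) :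
    ∃ z, ({x, y, z} : Finset α) ∈ T := by
  obtain ⟨e, he, hx, hy⟩ := hshadow x y h
  obtain ⟨p, q, r, hpq, hpr, hqr, rfl⟩ := Finset.card_eq_three.mp (h3 e he)
  have key : ∃ z, ({x, y, z} : Finset α) = {p, q, r} := by
    simp only [Finset.mem_insert, Finset.mem_singleton] at hx hy
    rcases hx with rfl | rfl | rfl <;> rcases hy with rfl | rfl | rfl
    · exact absurd rfl h
    · exact ⟨r, rfl⟩
    · exact ⟨q, by ext; simp; tauto⟩
    · exact ⟨r, by ext; simp; tauto⟩
    · exact absurd rfl h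
    · exact ⟨p, by ext; simp; tauto⟩
    · exact ⟨q, by ext; simp; tauto⟩
    · exact ⟨p, by ext; simp; tauto⟩
    · exact absurd rfl h
  obtain ⟨z, hz⟩ := key
  exact ⟨z, hz ▸ he⟩

theorem ne_of_card_three {α : Type} {a b c : α} (h : ({a, b, c} : Finset α).card = 3) :
    a ≠ b ∧ a ≠ c ∧ b ≠ c := by
  refine ⟨?_, ?_, ?_⟩ <;> rintro rfl
  · have := Finset.card_le_two (a := a) (b := c)
    simp at h
    omega
  · have := Finset.card_le_two (a := a) (b := b)
    rw [show ({a, b, a} : Finset α) = {a, b} by ext; simp; tauto] at h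
    omega
  · have := Finset.card_le_two (a := a) (b := b)
    simp at h
    omega

theorem no_K4 {α : Type} (T : Set (Finset α)) (hK4 : ¬ ContainsCopy K4minus T) (a b c d : α)
    (hab : a ≠ b) (hac : a ≠ c) (had : a ≠ d) (hbc : b ≠ c) (hbd : b ≠ d) (hcd : c ≠ d)
    (h1 : ({a, b, c} : Finset α) ∈ T) (h2 : ({a, b, d} : Finset α) ∈ T)
    (h3 : ({a, c, d} : Finset α) ∈ T) : False := by
  apply hK4
  refine ⟨![a, b, c, d], ?_, ?_⟩
  · intro i j hij
    fin_cases i <;> fin_cases j <;> simp_all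
  · intro e he
    simp only [K4minus, Set.mem_insert_iff, Set.mem_singleton_iff] at he
    rcases he with rfl | rfl | rfl
    · simpa [Finset.image_insert] using h1
    · simpa [Finset.image_insert] using h2
    · simpa [Finset.image_insert] using h3

/-- If a 3-graph `T` (on vertex set `α`) contains no copy of `K4⁻`, admits no
homomorphism from `F*`, and has complete shadow, then it admits no homomorphism
from `F₅`. -/
theorem no_hom_F5 (α : Type) (T : Set (Finset α)) (h3 : IsThreeGraph T)
    (hK4 : ¬ ContainsCopy K4minus T)
    (hFstar : ¬ ∃ φ : Fin 7 → α, IsHomOn Fstar T φ)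
    (hshadow : ∀ x y : α, x ≠ y → ∃ e ∈ T, x ∈ e ∧ y ∈ e) :
    ¬ ∃ φ : Fin 5 → α, IsHomOn F5 T φ := by
  rintro ⟨φ, hφ⟩
  have e1 : ({φ 0, φ 1, φ 2} : Finset α) ∈ T := by
    have := (hφ {0, 1, 2} (by simp [F5])).2
    simpa [Finset.image_insert] using this
  have e2 : ({φ 0, φ 1, φ 3} : Finset α) ∈ T := by
    have := (hφ {0, 1, 3} (by simp [F5])).2
    simpa [Finset.image_insert] using this
  have e3 : ({φ 2, φ 3, φ 4} : Finset α) ∈ T := by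
    have := (hφ {2, 3, 4} (by simp [F5])).2
    simpa [Finset.image_insert] using this
  generalize φ 0 = a at *
  generalize φ 1 = b at *
  generalize φ 2 = c at *
  generalize φ 3 = d at *
  generalize φ 4 = e at *
  obtain ⟨hab, hac, hbc⟩ := ne_of_card_three (h3 _ e1)
  obtain ⟨-, had, hbd⟩ := ne_of_card_three (h3 _ e2)
  obtain ⟨hcd, hce, hde⟩ := ne_of_card_three (h3 _ e3)
  by_cases hae : a = e
  · subst hae
    refine no_K4 T hK4 a b c d hab hac had hbc hbd hcd e1 e2 ?_
    rwa [show ({a, c, d} : Finset α) = {c, d, a} by ext; simp; tauto]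
  by_cases hbe : b = e
  · subst hbe
    refine no_K4 T hK4 b a c d hab.symm hbc hbd hac had hcd ?_ ?_ ?_
    · rwa [show ({b, a, c} : Finset α) = {a, b, c} by ext; simp; tauto]
    · rwa [show ({b, a, d} : Finset α) = {a, b, d} by ext; simp; tauto]
    · rwa [show ({b, c, d} : Finset α) = {c, d, b} by ext; simp; tauto]
  obtain ⟨x, e4⟩ := third_vertex T h3 hshadow a e hae
  obtain ⟨y, e5⟩ := third_vertex T h3 hshadow b e hbe
  apply hFstar
  refine ⟨![a, b, c, d, e, x, y], ?_⟩
  intro f hf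
  suffices h : f.image ![a, b, c, d, e, x, y] ∈ T from ⟨h3 _ h, h⟩
  simp only [Fstar, Set.mem_insert_iff, Set.mem_singleton_iff] at hf
  rcases hf with rfl | rfl | rfl | rfl | rfl
  · simpa [Finset.image_insert] using e1
  · simpa [Finset.image_insert] using e2
  · simpa [Finset.image_insert] using e3
  · simpa [Finset.image_insert] using e4
  · simpa [Finset.image_insert] using e5
end

section
/- Let U be a finite-dimensional 𝔽₂-vector space and let 𝒞 be a set of nonzero linear forms on U with dim_{𝔽₂} span(𝒞) ≤ 2. Then there exists a homomorphism from the cut template R(U,𝒞) to R(𝔽₂², {x, y, x+y}), where x and y are the two coordinate forms on 𝔽₂². -/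
open scoped Classical

/-- The first coordinate form `x` on `𝔽₂²`. -/
noncomputable def xForm : (ZMod 2 × ZMod 2) →ₗ[ZMod 2] ZMod 2 :=
  LinearMap.fst (ZMod 2) (ZMod 2) (ZMod 2)

/-- The second coordinate form `y` on `𝔽₂²`. -/
noncomputable def yForm : (ZMod 2 × ZMod 2) →ₗ[ZMod 2] ZMod 2 :=
  LinearMap.snd (ZMod 2) (ZMod 2) (ZMod 2)

/-- The set of forms `{x, y, x + y}` on `𝔽₂²`. -/
noncomputable def CFull : Set ((ZMod 2 × ZMod 2) →ₗ[ZMod 2] ZMod 2) :=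
  {xForm, yForm, xForm + yForm}

theorem exists_two_gens {W : Type} [AddCommGroup W] [Module (ZMod 2) W]
    [FiniteDimensional (ZMod 2) W] (h : Module.finrank (ZMod 2) W ≤ 2) :
    ∃ p q : W, ∀ w : W, ∃ a b : ZMod 2, w = a • p + b • q := by
  obtain ⟨n, hn⟩ : ∃ n, Module.finrank (ZMod 2) W = n := ⟨_, rfl⟩
  have b := Module.finBasisOfFinrankEq (ZMod 2) W hn
  rw [hn] at h
  interval_cases n
  · refine ⟨0, 0, fun w => ⟨0, 0, ?_⟩⟩
    have := b.sum_repr w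
    simp at this
    simp [← this]
  · refine ⟨b 0, 0, fun w => ⟨b.repr w 0, 0, ?_⟩⟩
    have := b.sum_repr w
    simp only [Fin.sum_univ_one] at this
    rw [this]; simp
  · refine ⟨b 0, b 1, fun w => ⟨b.repr w 0, b.repr w 1, ?_⟩⟩
    have := b.sum_repr w
    rw [Fin.sum_univ_two] at this
    exact this.symm

theorem factor_forms {U : Type} [AddCommGroup U] [Module (ZMod 2) U]
    (p q c : U →ₗ[ZMod 2] ZMod 2) (a b : ZMod 2) (hc : c ≠ 0) (h : c = a • p + b • q) :
    ∃ f : CFull, ∀ u, c u = f.1 (p u, q u) := by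
  have h2 : ∀ z : ZMod 2, z = 0 ∨ z = 1 := by decide
  rcases h2 a with rfl | rfl <;> rcases h2 b with rfl | rfl
  · simp at h; exact absurd h hc
  · exact ⟨⟨yForm, by simp [CFull]⟩, fun u => by simp [h, yForm]⟩
  · exact ⟨⟨xForm, by simp [CFull]⟩, fun u => by simp [h, xForm]⟩
  · exact ⟨⟨xForm + yForm, by simp [CFull]⟩, fun u => by simp [h, xForm, yForm]⟩

/-- If `𝒞` consists of nonzero linear forms and `dim span 𝒞 ≤ 2`, then the cut template
`R(U, 𝒞)` admits a homomorphism to `R(𝔽₂², {x, y, x+y})`. -/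
theorem hom_rank_two_cut_template_to_full (U : Type) [AddCommGroup U] [Module (ZMod 2) U]
    [FiniteDimensional (ZMod 2) U] (C : Set (U →ₗ[ZMod 2] ZMod 2))
    (hC : ∀ c ∈ C, c ≠ 0)
    (hrank : Module.finrank (ZMod 2) ↥(Submodule.span (ZMod 2) C) ≤ 2) :
    ∃ φ : ↥C ⊕ U → ↥CFull ⊕ (ZMod 2 × ZMod 2),
      IsHomOn (CutTemplate U C) (CutTemplate (ZMod 2 × ZMod 2) CFull) φ := by
  obtain ⟨p, q, hpq⟩ := exists_two_gens hrank
  have key : ∀ c : C, ∃ f : CFull, ∀ u, c.1 u = f.1 (p.1 u, q.1 u) := by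
    intro c
    obtain ⟨a, b, hab⟩ := hpq ⟨c.1, Submodule.subset_span c.2⟩
    exact factor_forms p.1 q.1 c.1 a b (hC _ c.2) (by simpa using congrArg Subtype.val hab)
  choose f hf using key
  refine ⟨Sum.map f (fun u => (p.1 u, q.1 u)), ?_⟩
  rintro e ⟨c, u, v, huv, h1, rfl⟩
  have hs : (f c).1 ((p.1 u, q.1 u) + (p.1 v, q.1 v)) = 1 := by
    rw [map_add, ← hf, ← hf, ← map_add, h1]
  have hne : ((p.1 u, q.1 u) : ZMod 2 × ZMod 2) ≠ (p.1 v, q.1 v) := by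
    intro h
    rw [h, map_add, CharTwo.add_self_eq_zero] at hs
    exact zero_ne_one hs
  simp only [Finset.image_insert, Finset.image_singleton, Sum.map_inl, Sum.map_inr]
  refine ⟨?_, f c, _, _, hne, hs, ?_⟩
  · exact (@Finset.card_eq_three _ _ (Classical.decEq _)).2 ⟨Sum.inl (f c), Sum.inr (p.1 u, q.1 u), Sum.inr (p.1 v, q.1 v),
      Sum.inl_ne_inr, Sum.inl_ne_inr, fun h => hne (Sum.inr.inj h), by
        ext z
        simp only [Finset.mem_insert, Finset.mem_singleton]⟩
  · ext z
    simp only [Finset.mem_insert, Finset.mem_singleton]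
end
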